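/- For every d ≥ 5 there exists a finite union of unit cubes E ⊆ ℝ^d (cubes placed at integer points), such that E tiles ℝ^d by translations but E is not a spectral set; similarly there exists a finite subset of ℤ^d that tiles ℤ^d by translations but is not spectral in ℤ^d. This disproves the 'tiling ⇒ spectral' direction of Fuglede's Spectral Set Conjecture in dimensions d ≥ 5. -/

import Mathlib

open scoped BigOperators
open Complex Real MeasureTheory

/-- A finite set `B ⊆ ℤ^d` is spectral in `ℤ^d` if there is a set `S` of frequencies
(in `ℝ^d`, thought of mod 1, i.e. in `𝕋^d`) with `#S = #B` and `χ̂_B(s - s') = 0` for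
all distinct `s, s' ∈ S`. -/
def SpectralZd {d : ℕ} (B : Finset (Fin d → ℤ)) : Prop :=
  ∃ S : Finset (Fin d → ℝ), S.card = B.card ∧
    ∀ s ∈ S, ∀ s' ∈ S, s ≠ s' →
      ∑ b ∈ B, Complex.exp (2 * π * Complex.I * (∑ j, (s j - s' j) * (b j : ℝ) : ℝ)) = 0

/-- The Fourier transform of the indicator of a set `E ⊆ ℝ^d` at frequency `ξ`. -/
noncomputable def ftInd {d : ℕ} (E : Set (Fin d → ℝ)) (ξ : Fin d → ℝ) : ℂ :=
  ∫ x in E, Complex.exp (2 * π * Complex.I * (∑ j, ξ j * x j : ℝ))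

/-- `E ⊆ ℝ^d` is spectral: some (countable) set `S` of exponentials forms an orthogonal
basis of `L²(E)`; equivalently `∑_{s∈S} |χ̂_E(x - s)|² = |E|²` for a.e. `x`. -/
def SpectralRd {d : ℕ} (E : Set (Fin d → ℝ)) : Prop :=
  ∃ S : Set (Fin d → ℝ), S.Countable ∧
    ∀ᵐ x : Fin d → ℝ,
      ∑' s : S, ‖ftInd E (x - (s : Fin d → ℝ))‖ ^ 2 = ((volume E).toReal) ^ 2

/-- The union of unit cubes placed at the integer points of `A`. -/
def cubes {d : ℕ} (A : Finset (Fin d → ℤ)) : Set (Fin d → ℝ) :=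
  {x : Fin d → ℝ | ∃ a ∈ A, ∀ j, (a j : ℝ) ≤ x j ∧ x j < (a j : ℝ) + 1}


/-- The basic exponential `e(x) = exp(2πix)`. -/
noncomputable def ee (x : ℝ) : ℂ := Complex.exp (2 * π * Complex.I * (x : ℝ))

lemma ee_add (x y : ℝ) : ee (x + y) = ee x * ee y := by
  unfold ee; rw [← Complex.exp_add]; push_cast; ring_nf

lemma ee_zero : ee 0 = 1 := by simp [ee]

lemma ee_int (n : ℤ) : ee n = 1 := by
  unfold ee; rw [Complex.exp_eq_one_iff]; exact ⟨n, by push_cast; ring⟩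

lemma ee_eq_one {x : ℝ} (h : ee x = 1) : ∃ n : ℤ, x = n := by
  unfold ee at h
  rw [Complex.exp_eq_one_iff] at h
  obtain ⟨n, hn⟩ := h
  refine ⟨n, ?_⟩
  have h2 : (2 * π * Complex.I : ℂ) ≠ 0 := by
    simp [Real.pi_ne_zero, Complex.I_ne_zero]
  have : (x : ℂ) = n := by
    apply mul_left_cancel₀ h2; rw [hn]; ring
  exact_mod_cast this

lemma ee_norm (x : ℝ) : ‖ee x‖ = 1 := by
  unfold ee
  have : (2 * π * Complex.I * (x : ℝ) : ℂ) = ((2 * π * x : ℝ) : ℂ) * Complex.I := by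
    push_cast; ring
  rw [this, Complex.norm_exp_ofReal_mul_I]

lemma ee_neg (x : ℝ) : ee (-x) = (starRingEnd ℂ) (ee x) := by
  unfold ee
  rw [← Complex.exp_conj]
  simp only [map_mul, Complex.conj_ofReal, Complex.conj_I, map_ofNat]
  push_cast
  ring_nf

lemma ee_sum {ι : Type*} (s : Finset ι) (f : ι → ℝ) : ee (∑ j ∈ s, f j) = ∏ j ∈ s, ee (f j) := by
  classical
  induction s using Finset.induction_on with
  | empty => simp [ee_zero]
  | insert a s ha ih => rw [Finset.sum_insert ha, Finset.prod_insert ha, ee_add, ih]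

lemma ee_continuous : Continuous ee := by
  unfold ee; fun_prop

/-- Fourier transform of the unit interval. -/
noncomputable def kap (x : ℝ) : ℂ := ∫ t in (0:ℝ)..1, ee (x * t)

lemma kap_continuous : Continuous kap := by
  unfold kap
  apply intervalIntegral.continuous_parametric_intervalIntegral_of_continuous'
  have := ee_continuous
  simp only [Function.uncurry_def]
  fun_prop

lemma kap_zero : kap 0 = 1 := by simp [kap, ee_zero]

lemma kap_eq {x : ℝ} (hx : x ≠ 0) : kap x = (ee x - 1) / (2 * π * Complex.I * x) := by
  have h2 : (2 * π * Complex.I * x : ℂ) ≠ 0 := by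
    simp [Real.pi_ne_zero, Complex.I_ne_zero, hx]
  have := integral_exp_mul_complex (a := 0) (b := 1) h2
  simp only [Complex.ofReal_one, mul_one, Complex.ofReal_zero, mul_zero, Complex.exp_zero] at this
  unfold kap ee
  rw [← this]
  congr 1
  ext t
  push_cast
  ring_nf

lemma kap_ne_zero {x : ℝ} (hx : |x| < 1) : kap x ≠ 0 := by
  by_cases h0 : x = 0
  · rw [h0, kap_zero]; exact one_ne_zero
  rw [kap_eq h0]
  have h2 : (2 * π * Complex.I * x : ℂ) ≠ 0 := by
    simp [Real.pi_ne_zero, Complex.I_ne_zero, h0]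
  apply div_ne_zero _ h2
  intro h
  obtain ⟨n, hn⟩ := ee_eq_one (sub_eq_zero.mp h)
  rw [hn] at hx h0
  have : |n| < 1 := by exact_mod_cast hx
  rw [Int.abs_lt_one_iff] at this
  exact h0 (by exact_mod_cast this)

lemma kap_norm_le (x : ℝ) : ‖kap x‖ ≤ 1 := by
  have := intervalIntegral.norm_integral_le_of_norm_le_const (a := 0) (b := 1) (C := 1)
    (f := fun t => ee (x * t)) (fun t _ => (ee_norm _).le)
  simpa [kap] using this

lemma kap_sq_le (x : ℝ) : ‖kap x‖ ^ 2 ≤ 2 * (1 + x ^ 2)⁻¹ := by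
  have h1 := kap_norm_le x
  have h3 : ‖kap x‖ * |x| ≤ 1 := by
    by_cases h0 : x = 0
    · simp [h0]
    · rw [kap_eq h0]
      have h4 : ‖ee x - 1‖ ≤ 2 := by
        refine (norm_sub_le _ _).trans ?_
        rw [ee_norm]; norm_num
      have hx : 0 < |x| := abs_pos.mpr h0
      rw [norm_div]
      have : ‖(2 * π * Complex.I * x : ℂ)‖ = 2 * π * |x| := by
        simp [abs_of_pos Real.pi_pos]
      rw [this, div_mul_eq_mul_div, div_le_one (by positivity)]
      have := Real.pi_gt_three
      nlinarith
  rw [← div_eq_mul_inv, le_div_iff₀ (by positivity)]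
  have h5 : ‖kap x‖ ^ 2 * x ^ 2 ≤ 1 := by
    rw [← sq_abs x, ← mul_pow]
    exact pow_le_one₀ (by positivity) h3
  have h6 : ‖kap x‖ ^ 2 ≤ 1 := pow_le_one₀ (by positivity) h1
  linarith

lemma kap_sq_hasSum (x : ℝ) : HasSum (fun n : ℤ => ‖kap (x + n)‖ ^ 2) 1 := by
  have hc : Continuous (fun t => ee (x * t)) := by
    have := ee_continuous
    fun_prop
  have hm : MemLp (fun t => ee (x * t)) 2 (volume.restrict (Set.Ioc (0:ℝ) 1)) := by
    refine MemLp.of_bound hc.aestronglyMeasurable 1 ?_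
    exact Filter.Eventually.of_forall (fun t => (ee_norm _).le)
  have := hasSum_sq_fourierCoeffOn (zero_lt_one) hm
  simp only [ee_norm] at this
  have h2 : (((1:ℝ) - 0)⁻¹ • ∫ (x : ℝ) in (0:ℝ)..1, (1:ℝ) ^ 2) = 1 := by simp
  rw [h2, ← (Equiv.neg ℤ).hasSum_iff] at this
  have h3 : (fun n : ℤ => ‖kap (x + n)‖ ^ 2) =
      (fun i => ‖fourierCoeffOn zero_lt_one (fun t => ee (x * t)) i‖ ^ 2) ∘ (Equiv.neg ℤ) := by
    funext n
    simp only [Function.comp, Equiv.neg_apply]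
    rw [fourierCoeffOn_eq_integral]
    simp only [sub_zero, div_one, one_smul, neg_neg, kap]
    congr 2
    refine intervalIntegral.integral_congr fun t _ => ?_
    simp only [fourier_coe_apply, smul_eq_mul]
    rw [add_mul, ee_add, mul_comm]
    congr 1
    unfold ee
    congr 1
    push_cast
    ring
  rw [h3]
  exact this

lemma kap_integrable (m : ℤ) :
    Integrable (fun x : ℝ => ee (m * x) * ((‖kap x‖ ^ 2 : ℝ) : ℂ)) := by
  have h := (integrable_inv_one_add_sq).const_mul 2
  refine h.mono' ?_ (Filter.Eventually.of_forall fun x => ?_)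
  · have := ee_continuous
    have := kap_continuous
    apply Continuous.aestronglyMeasurable
    fun_prop
  · rw [norm_mul, ee_norm, one_mul, Complex.norm_real, Real.norm_of_nonneg (by positivity)]
    exact kap_sq_le x

lemma kap_integral (m : ℤ) :
    ∫ x : ℝ, ee (m * x) * ((‖kap x‖ ^ 2 : ℝ) : ℂ) = if m = 0 then 1 else 0 := by
  have h1 := (kap_integrable m).hasSum_intervalIntegral_comp_add_int
  have hee := ee_continuous
  have hk := kap_continuous
  have h2 : HasSum (fun n : ℤ => ∫ x in (0:ℝ)..1,
      ee (m * (x + n)) * ((‖kap (x + n)‖ ^ 2 : ℝ) : ℂ)) (∫ x in (0:ℝ)..1, ee (m * x)) := by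
    refine intervalIntegral.hasSum_integral_of_dominated_convergence
      (fun n x => ‖kap (x + n)‖ ^ 2) (fun n => ?_) (fun n => ?_) ?_ ?_ ?_
    · apply Continuous.aestronglyMeasurable
      fun_prop
    · refine Filter.Eventually.of_forall fun x _ => ?_
      rw [norm_mul, ee_norm, one_mul, Complex.norm_real, Real.norm_of_nonneg (by positivity)]
    · exact Filter.Eventually.of_forall fun x _ => (kap_sq_hasSum x).summable
    · simp only [(kap_sq_hasSum _).tsum_eq]
      exact intervalIntegrable_const
    · refine Filter.Eventually.of_forall fun x _ => ?_
      have h3 : HasSum (fun n : ℤ => ((‖kap (x + n)‖ ^ 2 : ℝ) : ℂ)) ((1:ℝ):ℂ) :=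
        Complex.hasSum_ofReal.mpr (kap_sq_hasSum x)
      have h4 := h3.mul_left (ee (m * x))
      simp only [Complex.ofReal_one, mul_one] at h4
      have h5 : (fun n : ℤ => ee (m * (x + n)) * ((‖kap (x + n)‖ ^ 2 : ℝ) : ℂ)) =
          fun n : ℤ => ee (m * x) * ((‖kap (x + n)‖ ^ 2 : ℝ) : ℂ) := by
        funext n
        have : ee ((m:ℝ) * n) = 1 := by exact_mod_cast ee_int (m * n)
        rw [mul_add, ee_add, this, mul_one]
      rw [h5]
      exact h4
  rw [h1.unique h2]
  change kap m = _
  split_ifs with h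
  · simp [h, kap_zero]
  · rw [kap_eq (by exact_mod_cast h), ee_int]; simp

/-- The half-open unit cube at an integer point. -/
def ucube {d : ℕ} (a : Fin d → ℤ) : Set (Fin d → ℝ) :=
  Set.univ.pi fun j => Set.Ico (a j : ℝ) ((a j : ℝ) + 1)

lemma mem_ucube {d : ℕ} (a : Fin d → ℤ) (x : Fin d → ℝ) :
    x ∈ ucube a ↔ ∀ j, (a j : ℝ) ≤ x j ∧ x j < (a j : ℝ) + 1 := by
  simp [ucube, Set.mem_pi]

lemma mem_ucube_iff_floor {d : ℕ} (a : Fin d → ℤ) (x : Fin d → ℝ) :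
    x ∈ ucube a ↔ (fun j => ⌊x j⌋) = a := by
  rw [mem_ucube, funext_iff]
  exact forall_congr' fun j => Int.floor_eq_iff.symm

lemma cubes_eq {d : ℕ} (A : Finset (Fin d → ℤ)) : cubes A = ⋃ a ∈ A, ucube a := by
  ext x
  simp only [cubes, Set.mem_ofPred_eq, Set.mem_iUnion, mem_ucube, exists_prop]

lemma mem_cubes_iff {d : ℕ} (A : Finset (Fin d → ℤ)) (x : Fin d → ℝ) :
    x ∈ cubes A ↔ (fun j => ⌊x j⌋) ∈ A := by
  rw [cubes_eq]
  simp only [Set.mem_iUnion, mem_ucube_iff_floor, exists_prop]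
  constructor
  · rintro ⟨a, ha, rfl⟩; exact ha
  · intro h; exact ⟨_, h, rfl⟩

lemma ucube_measurable {d : ℕ} (a : Fin d → ℤ) : MeasurableSet (ucube a) :=
  MeasurableSet.univ_pi fun _ => measurableSet_Ico

lemma ucube_integral {d : ℕ} (a : Fin d → ℤ) (ξ : Fin d → ℝ) :
    ∫ x in ucube a, ee (∑ j, ξ j * x j) = ee (∑ j, ξ j * a j) * ∏ j, kap (ξ j) := by
  simp only [ee_sum]
  unfold ucube
  rw [volume_pi, Measure.restrict_pi_pi,
    integral_fintype_prod_eq_prod (fun j (t : ℝ) => ee (ξ j * t)), ← Finset.prod_mul_distrib]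
  refine Finset.prod_congr rfl fun j _ => ?_
  rw [integral_Ico_eq_integral_Ioc, ← intervalIntegral.integral_of_le (by linarith)]
  have := intervalIntegral.integral_comp_add_left (a := 0) (b := 1)
    (fun t => ee (ξ j * t)) (a j : ℝ)
  rw [add_zero] at this
  rw [← this, kap, ← intervalIntegral.integral_const_mul]
  congr 1
  ext t
  rw [mul_add, ee_add]

/-- Exponential sum of a finite set of integer points. -/
noncomputable def fsum {d : ℕ} (A : Finset (Fin d → ℤ)) (ξ : Fin d → ℝ) : ℂ :=
  ∑ a ∈ A, ee (∑ j, ξ j * a j)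

lemma ucube_integrableOn {d : ℕ} (a : Fin d → ℤ) (ξ : Fin d → ℝ) :
    IntegrableOn (fun x : Fin d → ℝ => ee (∑ j, ξ j * x j)) (ucube a) := by
  have hb : (ucube a) ⊆ Set.Icc (fun j => (a j : ℝ)) (fun j => (a j : ℝ) + 1) := by
    intro x hx
    rw [mem_ucube] at hx
    exact ⟨fun j => (hx j).1, fun j => (hx j).2.le⟩
  refine IntegrableOn.mono_set ?_ hb
  apply Continuous.integrableOn_Icc
  have := ee_continuous
  fun_prop

lemma ftInd_cubes {d : ℕ} (A : Finset (Fin d → ℤ)) (ξ : Fin d → ℝ) :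
    ftInd (cubes A) ξ = fsum A ξ * ∏ j, kap (ξ j) := by
  change ∫ x in cubes A, ee (∑ j, ξ j * x j) = _
  rw [cubes_eq, integral_biUnion_finset A (fun a _ => ucube_measurable a) ?_
    (fun a _ => ucube_integrableOn a ξ)]
  · simp only [ucube_integral, fsum, Finset.sum_mul]
  · intro a _ b _ hab
    rw [Function.onFun, Set.disjoint_left]
    intro x hx hx'
    rw [mem_ucube_iff_floor] at hx hx'
    exact hab (hx.symm.trans hx')

lemma fsum_zero {d : ℕ} (A : Finset (Fin d → ℤ)) : fsum A 0 = A.card := by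
  simp [fsum, ee_zero]

lemma ftInd_cubes_zero {d : ℕ} (A : Finset (Fin d → ℤ)) :
    ftInd (cubes A) 0 = A.card := by
  rw [ftInd_cubes, fsum_zero]; simp [kap_zero]

lemma volume_cubes {d : ℕ} (A : Finset (Fin d → ℤ)) :
    (volume (cubes A)).toReal = A.card := by
  have h := ftInd_cubes_zero A
  simp [ftInd, Measure.real] at h
  exact_mod_cast h

lemma fsum_continuous {d : ℕ} (A : Finset (Fin d → ℤ)) : Continuous (fsum A) := by
  unfold fsum
  have := ee_continuous
  fun_prop

lemma ftInd_continuous {d : ℕ} (A : Finset (Fin d → ℤ)) : Continuous (ftInd (cubes A)) := by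
  have : ftInd (cubes A) = fun ξ => fsum A ξ * ∏ j, kap (ξ j) := funext (ftInd_cubes A)
  rw [this]
  have := fsum_continuous A
  have := kap_continuous
  fun_prop

lemma ftInd_sq_eq {d : ℕ} (A : Finset (Fin d → ℤ)) (ξ : Fin d → ℝ) :
    ((‖ftInd (cubes A) ξ‖ ^ 2 : ℝ) : ℂ) = ∑ a ∈ A, ∑ b ∈ A,
      ∏ j, (ee ((a j - b j : ℤ) * ξ j) * ((‖kap (ξ j)‖ ^ 2 : ℝ) : ℂ)) := by
  rw [ftInd_cubes, norm_mul, mul_pow, Complex.ofReal_mul, norm_prod, ← Finset.prod_pow,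
    Complex.ofReal_prod]
  have : ((‖fsum A ξ‖ ^ 2 : ℝ) : ℂ) = ∑ a ∈ A, ∑ b ∈ A, ∏ j, ee ((a j - b j : ℤ) * ξ j) := by
    have h1 : ((‖fsum A ξ‖ ^ 2 : ℝ) : ℂ) = fsum A ξ * (starRingEnd ℂ) (fsum A ξ) := by
      rw [Complex.mul_conj, Complex.normSq_eq_norm_sq]
    rw [h1, fsum, map_sum, Finset.sum_mul_sum]
    refine Finset.sum_congr rfl fun a _ => Finset.sum_congr rfl fun b _ => ?_
    rw [← ee_neg, ← ee_add, ← ee_sum, ← Finset.sum_neg_distrib, ← Finset.sum_add_distrib]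
    congr 1
    refine Finset.sum_congr rfl fun j _ => ?_
    push_cast; ring
  rw [this, Finset.sum_mul]
  refine Finset.sum_congr rfl fun a _ => ?_
  rw [Finset.sum_mul]
  refine Finset.sum_congr rfl fun b _ => ?_
  rw [Finset.prod_mul_distrib]

lemma ftInd_sq_integrable' {d : ℕ} (A : Finset (Fin d → ℤ)) :
    Integrable (fun ξ => ((‖ftInd (cubes A) ξ‖ ^ 2 : ℝ) : ℂ)) := by
  simp only [ftInd_sq_eq]
  refine integrable_finsetSum _ fun a _ => integrable_finsetSum _ fun b _ => ?_
  exact Integrable.fintype_prod (fun j => kap_integrable (a j - b j))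

lemma ftInd_sq_integral {d : ℕ} (A : Finset (Fin d → ℤ)) :
    ∫ ξ, ‖ftInd (cubes A) ξ‖ ^ 2 = A.card := by
  have h : ∫ ξ, ((‖ftInd (cubes A) ξ‖ ^ 2 : ℝ) : ℂ) = A.card := by
    simp only [ftInd_sq_eq]
    have hI : ∀ a b : Fin d → ℤ, Integrable (fun ξ : Fin d → ℝ =>
        ∏ j, (ee ((a j - b j : ℤ) * ξ j) * ((‖kap (ξ j)‖ ^ 2 : ℝ) : ℂ))) := fun a b =>
      Integrable.fintype_prod (fun j => kap_integrable (a j - b j))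
    rw [integral_finsetSum _ fun a _ => integrable_finsetSum _ fun b _ => hI a b]
    have hab : ∀ a b : Fin d → ℤ, ∫ ξ : Fin d → ℝ,
        ∏ j, (ee ((a j - b j : ℤ) * ξ j) * ((‖kap (ξ j)‖ ^ 2 : ℝ) : ℂ)) =
        if b = a then 1 else 0 := by
      intro a b
      rw [integral_fintype_prod_volume_eq_prod
        (fun j (t : ℝ) => ee ((a j - b j : ℤ) * t) * ((‖kap t‖ ^ 2 : ℝ) : ℂ))]
      simp only [kap_integral]
      split_ifs with h
      · simp [h]
      · obtain ⟨j, hj⟩ := Function.ne_iff.mp h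
        refine Finset.prod_eq_zero (Finset.mem_univ j) ?_
        rw [if_neg]
        intro h0
        exact hj (by linarith)
    have : ∀ a ∈ A, ∫ ξ : Fin d → ℝ, ∑ b ∈ A,
        ∏ j, (ee ((a j - b j : ℤ) * ξ j) * ((‖kap (ξ j)‖ ^ 2 : ℝ) : ℂ)) = 1 := by
      intro a ha
      rw [integral_finsetSum _ fun b _ => hI a b]
      rw [Finset.sum_congr rfl fun b _ => hab a b, Finset.sum_ite_eq', if_pos ha]
    rw [Finset.sum_congr rfl this]
    simp
  rw [integral_complex_ofReal] at h
  exact_mod_cast h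

lemma ftInd_sq_integrable {d : ℕ} (A : Finset (Fin d → ℤ)) :
    Integrable (fun ξ => ‖ftInd (cubes A) ξ‖ ^ 2) := by
  exact (ftInd_sq_integrable' A).re

lemma ftInd_sq_lintegral {d : ℕ} (A : Finset (Fin d → ℤ)) :
    ∫⁻ ξ, ENNReal.ofReal (‖ftInd (cubes A) ξ‖ ^ 2) = A.card := by
  rw [← ofReal_integral_eq_lintegral_ofReal (ftInd_sq_integrable A)
    (Filter.Eventually.of_forall fun ξ => by positivity), ftInd_sq_integral]
  simp

theorem spectralZd_of_spectralRd {d : ℕ} (A : Finset (Fin d → ℤ)) (hA : A.Nonempty)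
    (h : SpectralRd (cubes A)) : SpectralZd A := by
  classical
  obtain ⟨S, hSc, hS⟩ := h
  rw [volume_cubes] at hS
  have hN : 0 < A.card := hA.card_pos
  have hNr : (0:ℝ) < (A.card : ℝ) ^ 2 := by positivity
  have hsum : ∀ᵐ x : Fin d → ℝ, Summable (fun s : S => ‖ftInd (cubes A) (x - (s : Fin d → ℝ))‖ ^ 2) := by
    filter_upwards [hS] with x hx
    by_contra hns
    rw [tsum_eq_zero_of_not_summable hns] at hx
    exact hNr.ne hx
  have hcont := ftInd_continuous A
  -- orthogonality
  have horth : ∀ s ∈ S, ∀ s' ∈ S, s ≠ s' → ftInd (cubes A) (s - s') = 0 := by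
    intro s hs s' hs' hne
    let g : (Fin d → ℝ) → ℝ := fun x =>
      ‖ftInd (cubes A) (x - s)‖ ^ 2 + ‖ftInd (cubes A) (x - s')‖ ^ 2
    have hg : Continuous g := by fun_prop
    have hle : ∀ᵐ x, g x ≤ (A.card : ℝ) ^ 2 := by
      filter_upwards [hS, hsum] with x hx hx2
      rw [← hx]
      have h3 := hx2.sum_le_tsum {(⟨s, hs⟩ : S), ⟨s', hs'⟩} (fun i _ => by positivity)
      rw [Finset.sum_pair (by simpa using hne)] at h3
      exact h3
    have hopen : IsOpen {x | (A.card : ℝ) ^ 2 < g x} := isOpen_lt continuous_const hg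
    have hz : volume {x | (A.card : ℝ) ^ 2 < g x} = 0 := by
      rw [ae_iff] at hle
      simpa using hle
    rw [IsOpen.measure_eq_zero_iff volume hopen] at hz
    have h4 : g s ≤ (A.card : ℝ) ^ 2 := by
      by_contra hlt
      have : s ∈ {x | (A.card : ℝ) ^ 2 < g x} := not_le.mp hlt
      rw [hz] at this
      exact this
    simp only [g, sub_self, ftInd_cubes_zero, Complex.norm_natCast] at h4
    have h5 : ‖ftInd (cubes A) (s - s')‖ ^ 2 = 0 := le_antisymm (by linarith) (by positivity)
    simpa using h5
  -- a cube with many points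
  have hmain : ∃ u : Fin d → ℝ, ∃ F : Finset S, F.card = A.card ∧
      ∀ s ∈ F, u + (s : Fin d → ℝ) ∈ ucube (0 : Fin d → ℤ) := by
    by_contra hcon
    push Not at hcon
    let G : (Fin d → ℝ) → ENNReal := fun x => ENNReal.ofReal (‖ftInd (cubes A) x‖ ^ 2)
    let Q : (Fin d → ℝ) → ENNReal := (ucube (0 : Fin d → ℤ)).indicator 1
    have hGm : Measurable G := by
      apply Measurable.ennreal_ofReal
      exact (hcont.norm.pow 2).measurable
    have hQm : Measurable Q := measurable_one.indicator (ucube_measurable 0)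
    have hcount : ∀ u : Fin d → ℝ, ∑' s : S, Q (u + s) ≤ ((A.card - 1 : ℕ) : ENNReal) := by
      intro u
      rw [ENNReal.tsum_eq_iSup_sum]
      refine iSup_le fun F => ?_
      have h1 : ∑ s ∈ F, Q (u + s) =
          ((F.filter fun s : S => u + (s : Fin d → ℝ) ∈ ucube (0 : Fin d → ℤ)).card : ENNReal) := by
        rw [Finset.card_filter]
        push_cast
        refine Finset.sum_congr rfl fun s _ => ?_
        simp [Q, Set.indicator_apply]
      rw [h1]
      norm_cast
      by_contra hlt
      have hlt' : A.card ≤ (F.filter fun s : S =>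
        u + (s : Fin d → ℝ) ∈ ucube (0 : Fin d → ℤ)).card := by omega
      obtain ⟨F', hF', hc⟩ := Finset.exists_subset_card_eq hlt'
      obtain ⟨s, hs, hs'⟩ := hcon u F' hc
      exact hs' (Finset.mem_filter.mp (hF' hs)).2
    have : Countable S := hSc
    have hvol : volume (ucube (0 : Fin d → ℤ)) = 1 := by
      simp [ucube, volume_pi, Measure.pi_pi]
    have e1 : ∫⁻ x, ∑' s : S, Q x * G (x - s) = (A.card : ENNReal) ^ 2 := by
      have : ∀ᵐ x, ∑' s : S, Q x * G (x - s) = Q x * (A.card : ENNReal) ^ 2 := by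
        filter_upwards [hS, hsum] with x hx hx2
        rw [ENNReal.tsum_mul_left]
        congr 1
        rw [← ENNReal.ofReal_tsum_of_nonneg (fun s => by positivity) hx2, hx,
          ENNReal.ofReal_pow (by positivity), ENNReal.ofReal_natCast]
      rw [lintegral_congr_ae this, lintegral_mul_const _ hQm]
      simp only [Q]
      rw [lintegral_indicator_one (ucube_measurable 0), hvol, one_mul]
    have e2 : ∫⁻ x, ∑' s : S, Q x * G (x - s) = ∫⁻ x, ∑' s : S, Q (x + s) * G x := by
      rw [lintegral_tsum, lintegral_tsum]
      · congr 1
        funext s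
        rw [← lintegral_sub_right_eq_self (fun x => Q (x + s) * G x) (s : Fin d → ℝ)]
        simp
      · intro s
        exact ((hQm.comp (measurable_id.add_const _)).mul hGm).aemeasurable
      · intro s
        exact (hQm.mul (hGm.comp (measurable_id.sub_const _))).aemeasurable
    have e3 : ∫⁻ x, ∑' s : S, Q (x + s) * G x ≤ ((A.card - 1 : ℕ) : ENNReal) * A.card := by
      rw [← ftInd_sq_lintegral A, ← lintegral_const_mul _ hGm]
      refine lintegral_mono fun x => ?_
      simp only
      rw [ENNReal.tsum_mul_right]
      gcongr
      exact hcount x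
    rw [← e2, e1] at e3
    have e4 : A.card ^ 2 ≤ (A.card - 1) * A.card := by exact_mod_cast e3
    have e5 : (A.card - 1) * A.card < A.card * A.card :=
      Nat.mul_lt_mul_of_pos_right (by omega) hN
    nlinarith
  obtain ⟨u, F, hFc, hF⟩ := hmain
  refine ⟨F.map (Function.Embedding.subtype _), by rw [Finset.card_map, hFc], ?_⟩
  intro s hs s' hs' hne
  rw [Finset.mem_map] at hs hs'
  obtain ⟨σ, hσ, rfl⟩ := hs
  obtain ⟨τ, hτ, rfl⟩ := hs'
  have h0 := horth σ σ.2 τ τ.2 hne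
  rw [ftInd_cubes] at h0
  rcases mul_eq_zero.mp h0 with h1 | h1
  · exact h1
  · exfalso
    rw [Finset.prod_eq_zero_iff] at h1
    obtain ⟨j, _, hj⟩ := h1
    refine kap_ne_zero ?_ hj
    have a1 := (mem_ucube _ _).mp (hF σ hσ) j
    have a2 := (mem_ucube _ _).mp (hF τ hτ) j
    simp only [Pi.add_apply, Pi.zero_apply, Int.cast_zero, zero_add] at a1 a2
    rw [Pi.sub_apply, abs_lt]
    constructor <;> linarith [a1.1, a1.2, a2.1, a2.2]

theorem cubes_tile {d : ℕ} (A : Finset (Fin d → ℤ)) (T : Set (Fin d → ℤ))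
    (hT : ∀ x : Fin d → ℤ, ∃! t, t ∈ T ∧ x - t ∈ A) :
    ∃ T : Set (Fin d → ℝ), ∀ᵐ x : Fin d → ℝ, ∃! t, t ∈ T ∧ x - t ∈ cubes A := by
  refine ⟨(fun t j => ((t j : ℤ) : ℝ)) '' T, Filter.Eventually.of_forall fun x => ?_⟩
  have key : ∀ t : Fin d → ℤ, (x - (fun j => ((t j : ℤ) : ℝ)) ∈ cubes A) ↔
      (fun j => ⌊x j⌋) - t ∈ A := by
    intro t
    rw [mem_cubes_iff]
    have : (fun j => ⌊(x - (fun j => ((t j : ℤ) : ℝ))) j⌋) = (fun j => ⌊x j⌋) - t := by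
      funext j
      simp
    rw [this]
  obtain ⟨t, ⟨ht, htA⟩, hu⟩ := hT (fun j => ⌊x j⌋)
  refine ⟨fun j => (t j : ℝ), ⟨⟨t, ht, rfl⟩, (key t).mpr htA⟩, ?_⟩
  rintro _ ⟨⟨t', ht', rfl⟩, h'⟩
  have := hu t' ⟨ht', (key t').mp h'⟩
  rw [this]

/-- Sixteen homomorphisms `(ℤ/6)⁵ → ℤ/6`, given by permutations of `1, …, 5`. -/
def phz : Fin 16 → Fin 5 → ℤ :=
  ![![3, 1, 4, 2, 5], ![1, 3, 2, 5, 4], ![1, 2, 4, 3, 5], ![1, 2, 3, 4, 5],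
    ![1, 4, 2, 5, 3], ![3, 2, 1, 5, 4], ![2, 5, 1, 3, 4], ![2, 1, 3, 4, 5],
    ![1, 2, 5, 4, 3], ![1, 3, 4, 2, 5], ![2, 1, 5, 4, 3], ![2, 3, 1, 5, 4],
    ![1, 4, 3, 2, 5], ![1, 2, 5, 3, 4], ![3, 2, 1, 4, 5], ![3, 1, 4, 2, 5]]

/-- A `6 × 6` Butson-Hadamard matrix over the cube roots of unity (first column dropped). -/
def kv : Fin 6 → Fin 5 → ℤ :=
  ![![0, 0, 0, 0, 0], ![0, 1, 1, 2, 2], ![1, 0, 2, 2, 1],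
    ![1, 2, 0, 1, 2], ![2, 2, 1, 0, 1], ![2, 1, 2, 1, 0]]

/-- The six elements `0, e₀, …, e₄`. -/
def tau (m : Fin 6) (j : Fin 5) : ℤ := if m = j.succ then 1 else 0

/-- The homomorphism attached to the layer `z`. -/
def phi (z : Fin 16) (w : Fin 5 → ZMod 6) : ZMod 6 := ∑ j, (phz z j : ZMod 6) * w j

lemma phi_tau_exists : ∀ z : Fin 16, ∀ c : ZMod 6, ∃ m : Fin 6,
    phi z (fun j => (tau m j : ZMod 6)) = c := by decide +kernel

lemma phi_tau_inj : ∀ z : Fin 16, ∀ m m' : Fin 6,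
    phi z (fun j => (tau m j : ZMod 6)) = phi z (fun j => (tau m' j : ZMod 6)) → m = m' := by
  decide +kernel

lemma kv_inj : ∀ m m' : Fin 6, (∀ j, ((kv m j : ℤ) : ZMod 3) = kv m' j) → m = m' := by
  decide +kernel

lemma kv_diff : ∀ m m' : Fin 6, ∃ i : Fin 16, ∃ ε : Fin 3, ∀ j : Fin 5,
    ((kv m j - kv m' j - (ε.val : ℤ) * phz i j : ℤ) : ZMod 3) = 0 := by
  decide +kernel

lemma phi_add (z : Fin 16) (w w' : Fin 5 → ZMod 6) : phi z (w + w') = phi z w + phi z w' := by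
  simp [phi, mul_add, Finset.sum_add_distrib]

/-- `phi` as a homomorphism. -/
def phiHom (z : Fin 16) : (Fin 5 → ZMod 6) →+ ZMod 6 :=
  AddMonoidHom.mk' (phi z) (phi_add z)

/-- The kernel of `phi z`. -/
def Kz (z : Fin 16) : Finset (Fin 5 → ZMod 6) := Finset.univ.filter fun y => phi z y = 0

lemma mem_Kz (z : Fin 16) (y : Fin 5 → ZMod 6) : y ∈ Kz z ↔ phi z y = 0 := by
  unfold Kz; rw [Finset.mem_filter]; simp

lemma Kz_card (z : Fin 16) : (Kz z).card = 1296 := by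
  have h1 := AddSubgroup.card_mul_index (phiHom z).ker
  have hsurj : Function.Surjective (phiHom z) := fun c => by
    obtain ⟨m, hm⟩ := phi_tau_exists z c
    exact ⟨fun j => (tau m j : ZMod 6), hm⟩
  rw [AddSubgroup.index_ker, AddMonoidHom.range_eq_top.mpr hsurj] at h1
  have h2 : Nat.card (phiHom z).ker = (Kz z).card := by
    rw [← Nat.card_eq_finsetCard]
    refine Nat.card_congr (Equiv.subtypeEquivRight fun y => ?_)
    rw [mem_Kz]
    exact AddMonoidHom.mem_ker
  rw [h2] at h1
  simp at h1
  omega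

/-- The character `y ↦ e(n·y/3)`. -/
noncomputable def chi (n : Fin 5 → ℤ) (y : Fin 5 → ZMod 6) : ℂ :=
  ee (∑ j, (n j : ℝ) * ((y j).val : ℝ) / 3)

lemma chi_add (n : Fin 5 → ℤ) (y y' : Fin 5 → ZMod 6) : chi n (y + y') = chi n y * chi n y' := by
  unfold chi
  rw [ee_sum, ee_sum, ee_sum, ← Finset.prod_mul_distrib]
  refine Finset.prod_congr rfl fun j _ => ?_
  rw [Pi.add_apply, ZMod.val_add, ← ee_add]
  have h := Nat.mod_add_div ((y j).val + (y' j).val) 6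
  set r := ((y j).val + (y' j).val) % 6
  set q := ((y j).val + (y' j).val) / 6
  have h' : ((y j).val : ℝ) + (y' j).val = r + 6 * q := by exact_mod_cast h.symm
  have : (n j : ℝ) * ((y j).val : ℝ) / 3 + (n j : ℝ) * ((y' j).val : ℝ) / 3 =
      (n j : ℝ) * (r : ℝ) / 3 + ((n j * 2 * q : ℤ) : ℝ) := by
    push_cast
    linear_combination (n j : ℝ) / 3 * h'
  rw [this, ee_add, ee_int, mul_one]

lemma chi_sum (n : Fin 5 → ℤ) (z : Fin 16) :
    (∑ y ∈ Kz z, chi n y = 1296 ∧ ∀ y ∈ Kz z, chi n y = 1) ∨ ∑ y ∈ Kz z, chi n y = 0 := by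
  by_cases h : ∀ y ∈ Kz z, chi n y = 1
  · left
    refine ⟨?_, h⟩
    rw [Finset.sum_congr rfl h]
    simp [Kz_card]
  · right
    push Not at h
    obtain ⟨y0, hy0, hne⟩ := h
    have h1 : ∑ y ∈ Kz z, chi n y = ∑ y ∈ Kz z, chi n (y + y0) := by
      symm
      refine Finset.sum_equiv (Equiv.addRight y0) (fun y => ?_) (fun y _ => rfl)
      rw [mem_Kz] at hy0 ⊢
      rw [mem_Kz, Equiv.coe_addRight, phi_add, hy0, add_zero]
    simp only [chi_add] at h1
    rw [← Finset.sum_mul] at h1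
    have h2 : (∑ y ∈ Kz z, chi n y) * (chi n y0 - 1) = 0 := by
      rw [mul_sub, ← h1]; ring
    exact (mul_eq_zero.mp h2).resolve_right (sub_ne_zero.mpr hne)

/-- Frequencies at which the exponential sum is large. -/
def Good (n : Fin 5 → ℤ) : Prop :=
  ∃ i : Fin 16, ∃ ε : ℤ, ∀ j, (3 : ℤ) ∣ n j - ε * phz i j

lemma chi_good (n : Fin 5 → ℤ) (i : Fin 16) (ε : ℤ) (h : ∀ j, (3 : ℤ) ∣ n j - ε * phz i j)
    (y : Fin 5 → ZMod 6) (hy : y ∈ Kz i) : chi n y = 1 := by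
  rw [mem_Kz, phi] at hy
  have h1 : ((∑ j, phz i j * ((y j).val : ℤ) : ℤ) : ZMod 6) = 0 := by
    push_cast
    simpa using hy
  rw [ZMod.intCast_zmod_eq_zero_iff_dvd] at h1
  have h2 : (3 : ℤ) ∣ ∑ j, n j * ((y j).val : ℤ) := by
    have h3 : ∑ j, n j * ((y j).val : ℤ) = ∑ j, (n j - ε * phz i j) * ((y j).val : ℤ) +
        ε * ∑ j, phz i j * ((y j).val : ℤ) := by
      rw [Finset.mul_sum, ← Finset.sum_add_distrib]
      refine Finset.sum_congr rfl fun j _ => by ring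
    rw [h3]
    refine dvd_add (Finset.dvd_sum fun j _ => Dvd.dvd.mul_right (h j) _) (Dvd.dvd.mul_left ?_ _)
    exact dvd_trans (by norm_num) h1
  obtain ⟨m, hm⟩ := h2
  unfold chi
  have : ∑ j, (n j : ℝ) * ((y j).val : ℝ) / 3 = (m : ℝ) := by
    rw [← Finset.sum_div]
    have : (∑ j, (n j : ℝ) * ((y j).val : ℝ)) = 3 * m := by exact_mod_cast hm
    rw [this]; ring
  rw [this, ee_int]

lemma chi_total (n : Fin 5 → ℤ) (hn : Good n) :
    1296 ≤ (∑ z : Fin 16, ∑ y ∈ Kz z, chi n y).re := by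
  obtain ⟨i, ε, h⟩ := hn
  rw [Complex.re_sum]
  have h1 : (∑ y ∈ Kz i, chi n y).re = 1296 := by
    rw [Finset.sum_congr rfl (chi_good n i ε h)]
    simp [Kz_card]
  rw [← h1]
  refine Finset.single_le_sum (f := fun z => (∑ y ∈ Kz z, chi n y).re) (fun z _ => ?_)
    (Finset.mem_univ i)
  rcases chi_sum n z with h2 | h2
  · simp only [h2.1]; norm_num
  · simp only [h2]; norm_num

/-- Stretching factors of the coordinates. -/
def cc (j : Fin 5) : ℤ := if j = 4 then 16 else 1

/-- Offsets by which the layer index enters the coordinates. -/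
def oo (j : Fin 5) : ℤ := if j = 4 then 3 else 0

/-- The parametrization `ℤ⁵ × {0,…,15} ≃ ℤ⁵`. -/
def psi (w : Fin 5 → ℤ) (z : Fin 16) (j : Fin 5) : ℤ := cc j * w j + oo j * (z.val : ℤ)

lemma psi_inj {w w' : Fin 5 → ℤ} {z z' : Fin 16} (h : psi w z = psi w' z') :
    w = w' ∧ z = z' := by
  have hz : z = z' := by
    have := congrFun h 4
    simp only [psi, cc, oo, if_true] at this
    ext
    have := z.2
    have := z'.2
    omega
  refine ⟨?_, hz⟩
  subst hz
  funext j
  have := congrFun h j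
  simp only [psi, cc] at this
  split_ifs at this <;> omega

lemma psi_surj (x : Fin 5 → ℤ) : ∃ w z, psi w z = x := by
  have hz0 : 0 ≤ (11 * x 4) % 16 := Int.emod_nonneg _ (by norm_num)
  have hz1 : (11 * x 4) % 16 < 16 := Int.emod_lt_of_pos _ (by norm_num)
  refine ⟨fun j => if j = 4 then (x 4 - 3 * ((11 * x 4) % 16)) / 16 else x j,
    ⟨((11 * x 4) % 16).toNat, by omega⟩, ?_⟩
  funext j
  simp only [psi, cc, oo]
  by_cases hj : j = 4
  · subst hj
    simp only [if_true]
    omega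
  · simp [hj]

/-- Parameter space of the tile. -/
def BI (k : ℕ) : Finset ((Σ _ : Fin 16, (Fin 5 → ZMod 6)) × (Fin 5 → Fin k)) :=
  (Finset.univ.sigma fun z => Kz z) ×ˢ Finset.univ

/-- Residue plus period. -/
def yq {k : ℕ} (y : Fin 5 → ZMod 6) (q : Fin 5 → Fin k) (j : Fin 5) : ℤ :=
  ((y j).val : ℤ) + 6 * ((q j).val : ℤ)

/-- Parametrization of the tile. -/
def bet (k : ℕ) (p : (Σ _ : Fin 16, (Fin 5 → ZMod 6)) × (Fin 5 → Fin k)) : Fin 5 → ℤ :=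
  psi (yq p.1.2 p.2) p.1.1

lemma yq_inj {k : ℕ} {y y' : Fin 5 → ZMod 6} {q q' : Fin 5 → Fin k} (h : yq y q = yq y' q') :
    y = y' ∧ q = q' := by
  have h1 : ∀ j, (y j).val = (y' j).val ∧ (q j).val = (q' j).val := by
    intro j
    have := congrFun h j
    simp only [yq] at this
    have h1 := ZMod.val_lt (y j)
    have h2 := ZMod.val_lt (y' j)
    omega
  exact ⟨funext fun j => ZMod.val_injective 6 (h1 j).1, funext fun j => Fin.ext (h1 j).2⟩

lemma bet_inj (k : ℕ) : Function.Injective (bet k) := by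
  rintro ⟨⟨z, y⟩, q⟩ ⟨⟨z', y'⟩, q'⟩ h
  obtain ⟨h1, rfl⟩ := psi_inj h
  obtain ⟨h2, h3⟩ := yq_inj h1
  simp only at h2 h3
  subst h2 h3
  rfl

/-- The tile in `ℤ⁵`. -/
def BB (k : ℕ) : Finset (Fin 5 → ℤ) := (BI k).map ⟨bet k, bet_inj k⟩

lemma BB_card (k : ℕ) : (BB k).card = 16 * 1296 * k ^ 5 := by
  rw [BB, Finset.card_map, BI, Finset.card_product, Finset.card_sigma]
  simp [Kz_card]

lemma psi_mem_BB (k : ℕ) (w : Fin 5 → ℤ) (z : Fin 16) :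
    psi w z ∈ BB k ↔ (∀ j, 0 ≤ w j ∧ w j < 6 * k) ∧ phi z (fun j => (w j : ZMod 6)) = 0 := by
  constructor
  · intro h
    rw [BB, Finset.mem_map] at h
    obtain ⟨⟨⟨z', y⟩, q⟩, hm, he⟩ := h
    obtain ⟨h1, h2⟩ := psi_inj (w := yq y q) (z := z') he
    subst h1 h2
    constructor
    · intro j
      have h1 := ZMod.val_lt (y j)
      have h2 := (q j).2
      simp only [yq]
      omega
    · simp only [BI, Finset.mem_product, Finset.mem_sigma, Finset.mem_univ, true_and,
        and_true, mem_Kz] at hm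
      have : (fun j => (yq y q j : ZMod 6)) = y := by
        funext j
        simp only [yq]
        push_cast
        rw [ZMod.natCast_zmod_val]
        have : (6 : ZMod 6) = 0 := by decide
        rw [this]; ring
      rw [this]; exact hm
  · rintro ⟨h1, h2⟩
    rw [BB, Finset.mem_map]
    refine ⟨⟨⟨z, fun j => (w j : ZMod 6)⟩, fun j => ⟨(w j / 6).toNat, ?_⟩⟩, ?_, ?_⟩
    · have := h1 j
      omega
    · simp only [BI, Finset.mem_product, Finset.mem_sigma, Finset.mem_univ, true_and,
        and_true, mem_Kz]
      exact h2
    · change psi _ _ = _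
      congr 1
      funext j
      simp only [yq]
      have h3 := h1 j
      rw [ZMod.val_intCast]
      push_cast
      omega

lemma psi_sub (w t : Fin 5 → ℤ) (z : Fin 16) : psi w z - psi t 0 = psi (w - t) z := by
  funext j
  simp [psi]
  ring

lemma BB_tile (k : ℕ) (hk : 0 < k) :
    ∃ T : Set (Fin 5 → ℤ), ∀ x : Fin 5 → ℤ, ∃! t, t ∈ T ∧ x - t ∈ BB k := by
  refine ⟨{t | ∃ m : Fin 6, ∃ q : Fin 5 → ℤ, t = psi (fun j => tau m j + 6 * k * q j) 0}, ?_⟩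
  intro x
  obtain ⟨w, z, rfl⟩ := psi_surj x
  have hz6 : (6 : ZMod 6) = 0 := by decide
  have hphi : ∀ (m : Fin 6) (q : Fin 5 → ℤ),
      phi z (fun j => ((w - fun j => tau m j + 6 * k * q j) j : ZMod 6)) =
      phi z (fun j => (w j : ZMod 6)) - phi z (fun j => (tau m j : ZMod 6)) := by
    intro m q
    simp only [phi, ← Finset.sum_sub_distrib]
    refine Finset.sum_congr rfl fun j _ => ?_
    simp only [Pi.sub_apply]
    push_cast
    rw [hz6]; ring
  have hk6 : (0 : ℤ) < 6 * k := by positivity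
  obtain ⟨m, hm⟩ := phi_tau_exists z (phi z (fun j => (w j : ZMod 6)))
  refine ⟨psi (fun j => tau m j + 6 * k * ((w j - tau m j) / (6 * k))) 0, ⟨⟨m, _, rfl⟩, ?_⟩, ?_⟩
  · rw [psi_sub, psi_mem_BB]
    constructor
    · intro j
      simp only [Pi.sub_apply]
      have e1 := Int.emod_nonneg (w j - tau m j) hk6.ne'
      have e2 := Int.emod_lt_of_pos (w j - tau m j) hk6
      have e3 := Int.emod_add_mul_ediv (w j - tau m j) (6 * k)
      constructor <;> linarith
    · rw [hphi, hm, sub_self]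
  · rintro _ ⟨⟨m', q', rfl⟩, h⟩
    rw [psi_sub, psi_mem_BB, hphi] at h
    obtain ⟨h1, h2⟩ := h
    have hmm : m' = m := phi_tau_inj z _ _ (by rw [hm, ← sub_eq_zero.mp h2])
    subst hmm
    congr 1
    funext j
    have h3 := h1 j
    simp only [Pi.sub_apply] at h3
    have : (w j - tau m' j) / (6 * k) = q' j := by
      rw [Int.ediv_eq_iff_of_pos hk6]
      constructor <;> linarith
    rw [this]

lemma cc_pos (j : Fin 5) : (0 : ℝ) < cc j := by
  unfold cc; split_ifs <;> norm_num

lemma ee_sub_one_le (x : ℝ) : ‖ee x - 1‖ ≤ 2 * π * |x| := by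
  have h := Real.norm_exp_I_mul_ofReal_sub_one_le (x := 2 * π * x)
  have e : ee x = Complex.exp (Complex.I * ((2 * π * x : ℝ) : ℂ)) := by
    unfold ee; congr 1; push_cast; ring
  rw [e]
  refine h.trans ?_
  rw [Real.norm_eq_abs, abs_mul, abs_of_pos (by positivity)]

lemma geom_ne_zero (k : ℕ) (hk : 0 < k) (x : ℝ) (hx : |x| * k < 1) :
    ∑ q : Fin k, ee (x * (q.val : ℝ)) ≠ 0 := by
  have hkr : (0:ℝ) < k := by exact_mod_cast hk
  have hpow : ∀ q : ℕ, ee (x * (q : ℝ)) = ee x ^ q := by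
    intro q
    induction q with
    | zero => simp [ee_zero]
    | succ q ih => rw [pow_succ, ← ih, ← ee_add]; push_cast; ring_nf
  simp only [hpow]
  rw [Fin.sum_univ_eq_sum_range (fun q => ee x ^ q) k]
  by_cases h1 : ee x = 1
  · simp [h1]; omega
  · rw [geom_sum_eq h1]
    apply div_ne_zero _ (sub_ne_zero.mpr h1)
    rw [← hpow, sub_ne_zero]
    intro h
    obtain ⟨n, hn⟩ := ee_eq_one h
    have h2 : |(n : ℝ)| < 1 := by
      rw [← hn, abs_mul, abs_of_pos hkr]; exact hx
    have h3 : |n| < 1 := by exact_mod_cast h2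
    rw [Int.abs_lt_one_iff] at h3
    rw [h3] at hn
    have : x = 0 := by
      rcases mul_eq_zero.mp (hn.trans Int.cast_zero) with h | h
      · exact h
      · exact absurd h hkr.ne'
    exact h1 (by rw [this, ee_zero])

/-- The small phase. -/
noncomputable def thet (u : Fin 5 → ℝ) (p : Σ _ : Fin 16, (Fin 5 → ZMod 6)) : ℝ :=
  ∑ j, u j * (cc j * ((p.2 j).val : ℝ) + oo j * (p.1.val : ℝ))

lemma thet_le (k : ℕ) (hk : 0 < k) (u : Fin 5 → ℝ) (hu : ∀ j, |u j| * (cc j * (6 * k)) < 1)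
    (p : Σ _ : Fin 16, (Fin 5 → ZMod 6)) : |thet u p| ≤ 40 / (6 * k) := by
  have hkr : (0:ℝ) < k := by exact_mod_cast hk
  unfold thet
  refine (Finset.abs_sum_le_sum_abs _ _).trans ?_
  have : ∀ j ∈ (Finset.univ : Finset (Fin 5)),
      |u j * (cc j * ((p.2 j).val : ℝ) + oo j * (p.1.val : ℝ))| ≤ 8 / (6 * k) := by
    intro j _
    rw [abs_mul, le_div_iff₀ (by positivity)]
    have h1 : ((p.2 j).val : ℝ) ≤ 5 := by
      have := ZMod.val_lt (p.2 j)
      exact_mod_cast (by omega : (p.2 j).val ≤ 5)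
    have h2 : (p.1.val : ℝ) ≤ 15 := by
      have := p.1.2
      exact_mod_cast (by omega : p.1.val ≤ 15)
    have h1' : (0:ℝ) ≤ ((p.2 j).val : ℝ) := by positivity
    have h2' : (0:ℝ) ≤ (p.1.val : ℝ) := by positivity
    have h3 : |(cc j * ((p.2 j).val : ℝ) + oo j * (p.1.val : ℝ))| ≤ 8 * cc j := by
      unfold cc oo
      rw [abs_le]
      split_ifs
      · push_cast; constructor <;> linarith
      · push_cast; constructor <;> linarith
    have h4 := hu j
    calc |u j| * |(cc j * ((p.2 j).val : ℝ) + oo j * (p.1.val : ℝ))| * (6 * k)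
        ≤ |u j| * (8 * cc j) * (6 * k) := by gcongr
      _ = 8 * (|u j| * (cc j * (6 * k))) := by ring
      _ ≤ 8 := by linarith
  refine (Finset.sum_le_sum this).trans ?_
  simp
  rw [← mul_div_assoc]
  norm_num

lemma term_eq (k : ℕ) (n : Fin 5 → ℤ) (u : Fin 5 → ℝ)
    (p : Σ _ : Fin 16, (Fin 5 → ZMod 6)) (q : Fin 5 → Fin k) :
    ee (∑ j, ((n j : ℝ) / 3 + u j) * (bet k (p, q) j : ℝ)) =
      (chi n p.2 * ee (thet u p)) * ∏ j, ee ((6 * u j * cc j) * ((q j).val : ℝ)) := by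
  unfold chi thet
  simp only [ee_sum, ← Finset.prod_mul_distrib]
  refine Finset.prod_congr rfl fun j _ => ?_
  simp only [← ee_add]
  have : ∃ m : ℤ, ((n j : ℝ) / 3 + u j) * (bet k (p, q) j : ℝ) =
      ((n j : ℝ) * ((p.2 j).val : ℝ) / 3 +
        u j * (cc j * ((p.2 j).val : ℝ) + oo j * (p.1.val : ℝ)) +
        (6 * u j * cc j) * ((q j).val : ℝ)) + m := by
    simp only [bet, psi, yq, cc, oo]
    split_ifs
    · refine ⟨n j * (5 * (p.2 j).val + 32 * (q j).val + p.1.val), ?_⟩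
      push_cast
      ring
    · refine ⟨n j * (2 * (q j).val), ?_⟩
      push_cast
      ring
  obtain ⟨m, hm⟩ := this
  rw [hm, ee_add, ee_int, mul_one]

lemma fsum_BB (k : ℕ) (n : Fin 5 → ℤ) (u : Fin 5 → ℝ) :
    fsum (BB k) (fun j => (n j : ℝ) / 3 + u j) =
      (∑ p ∈ Finset.univ.sigma fun z => Kz z, chi n p.2 * ee (thet u p)) *
        ∏ j, ∑ q : Fin k, ee ((6 * u j * cc j) * (q.val : ℝ)) := by
  rw [fsum, BB, Finset.sum_map, BI, Finset.sum_product, Finset.prod_univ_sum, Finset.sum_mul]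
  refine Finset.sum_congr rfl fun p _ => ?_
  rw [Finset.mul_sum, Fintype.piFinset_univ]
  refine Finset.sum_congr rfl fun q _ => ?_
  exact term_eq k n u p q

lemma fsum_BB_ne_zero (k : ℕ) (hk : 1000 ≤ k) (n : Fin 5 → ℤ) (hn : Good n) (u : Fin 5 → ℝ)
    (hu : ∀ j, |u j| * (cc j * (6 * k)) < 1) :
    fsum (BB k) (fun j => (n j : ℝ) / 3 + u j) ≠ 0 := by
  rw [fsum_BB]
  have hk0 : 0 < k := by omega
  apply mul_ne_zero
  · intro h0
    set I : Finset (Σ _ : Fin 16, (Fin 5 → ZMod 6)) := Finset.univ.sigma fun z => Kz z with hI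
    have hcard : I.card = 16 * 1296 := by
      rw [hI, Finset.card_sigma]; simp [Kz_card]
    have h1 := chi_total n hn
    rw [Finset.sum_sigma'] at h1
    have h2 : ∑ p ∈ I, chi n p.2 = - ∑ p ∈ I, chi n p.2 * (ee (thet u p) - 1) := by
      simp only [mul_sub, Finset.sum_sub_distrib, h0, mul_one]
      ring
    have h3 : ‖∑ p ∈ I, chi n p.2‖ ≤ (16 * 1296 : ℝ) * (2 * π * (40 / (6 * k))) := by
      rw [h2, norm_neg]
      refine (norm_sum_le _ _).trans ?_
      have : ∀ p ∈ I, ‖chi n p.2 * (ee (thet u p) - 1)‖ ≤ 2 * π * (40 / (6 * k)) := by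
        intro p _
        rw [norm_mul, chi, ee_norm, one_mul]
        refine (ee_sub_one_le _).trans ?_
        gcongr
        exact thet_le k hk0 u hu p
      refine (Finset.sum_le_card_nsmul _ _ _ this).trans ?_
      rw [hcard, nsmul_eq_mul]
      apply le_of_eq
      norm_num
    have h4 := (Complex.re_le_norm _).trans h3
    have h5 := h1.trans h4
    have hkr : (1000 : ℝ) ≤ k := by exact_mod_cast hk
    have h6 : (40 / (6 * k) : ℝ) ≤ 40 / 6000 := by
      apply div_le_div_of_nonneg_left <;> linarith
    have h7 := Real.pi_lt_d2
    have h8 : 2 * π * (40 / (6 * k) : ℝ) ≤ 2 * 3.15 * (40 / 6000) := by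
      have : (0:ℝ) ≤ 40 / (6 * k) := by positivity
      gcongr
    norm_num at h8
    linarith
  · rw [Finset.prod_ne_zero_iff]
    intro j _
    apply geom_ne_zero k hk0
    have := hu j
    rw [abs_mul, abs_mul, abs_of_pos (cc_pos j)]
    norm_num
    linarith

lemma prod_cc (k : ℕ) : ∏ j : Fin 5, (cc j * (2 * k)).toNat = 16 * 32 * k ^ 5 := by
  have h : ∀ j, (cc j * (2 * k)).toNat = (if j = 4 then 16 else 1) * (2 * k) := by
    intro j
    unfold cc
    split_ifs <;> omega
  simp only [h, Fin.prod_univ_five]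
  simp (decide := true)
  ring

theorem BB_not_spectral (k : ℕ) (hk : 1000 ≤ k) : ¬ SpectralZd (BB k) := by
  classical
  rintro ⟨S, hcard, hS⟩
  rw [BB_card] at hcard
  have hk0 : 0 < k := by omega
  have hkr : (0:ℝ) < k := by exact_mod_cast hk0
  have hM : ∀ j, (0:ℤ) < cc j * (2 * k) := by
    intro j; unfold cc; split_ifs <;> omega
  let fl : (Fin 5 → ℝ) → Fin 5 → ℤ := fun s j => ⌊s j * (cc j * (6 * k))⌋
  let cl : (Fin 5 → ℝ) → Fin 5 → ℤ := fun s j => fl s j % (cc j * (2 * k))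
  let hh : (Fin 5 → ℝ) → Fin 5 → ℤ := fun s j => fl s j / (cc j * (2 * k))
  let R : Finset (Fin 5 → ℤ) := Fintype.piFinset fun j => Finset.Ico 0 (cc j * (2 * k))
  have hR : R.card = 16 * 32 * k ^ 5 := by
    simp only [R, Fintype.card_piFinset, Int.card_Ico, sub_zero, prod_cc]
  have hmaps : ∀ s ∈ S, cl s ∈ R := by
    intro s _
    simp only [R, Fintype.mem_piFinset, Finset.mem_Ico]
    exact fun j => ⟨Int.emod_nonneg _ (hM j).ne', Int.emod_lt_of_pos _ (hM j)⟩
  have hlt : R.card * 40 < S.card := by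
    rw [hR, hcard]
    have : 0 < k ^ 5 := by positivity
    omega
  obtain ⟨c, _, hc⟩ := Finset.exists_lt_card_fiber_of_mul_lt_card_of_maps_to hmaps hlt
  set S' := S.filter fun s => cl s = c with hS'
  -- pigeonhole against the clique
  let P : Finset ((Fin 5 → ℝ) × Fin 6) := S' ×ˢ Finset.univ
  let F : (Fin 5 → ℝ) × Fin 6 → (Fin 5 → ZMod 3) := fun p j => ((hh p.1 j + kv p.2 j : ℤ) : ZMod 3)
  have hP : (Finset.univ : Finset (Fin 5 → ZMod 3)).card < P.card := by
    simp only [P, Finset.card_product, Finset.card_univ, Fintype.card_fin, Fintype.card_fun,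
      ZMod.card]
    norm_num
    omega
  obtain ⟨⟨s, m⟩, hs, ⟨s', m'⟩, hs', hne, hF⟩ :=
    Finset.exists_ne_map_eq_of_card_lt_of_maps_to hP (f := F) (fun _ _ => by simp)
  simp only [P, Finset.mem_product, Finset.mem_univ, and_true, hS', Finset.mem_filter] at hs hs'
  have hF' : ∀ j, ((hh s j + kv m j : ℤ) : ZMod 3) = ((hh s' j + kv m' j : ℤ) : ZMod 3) :=
    fun j => congrFun hF j
  have hss : s ≠ s' := by
    rintro rfl
    apply hne
    have : m = m' := by
      apply kv_inj
      intro j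
      have := hF' j
      push_cast at this
      exact add_left_cancel this
    rw [this]
  have hgood : Good (fun j => hh s j - hh s' j) := by
    obtain ⟨i, ε, h⟩ := kv_diff m' m
    refine ⟨i, (ε.val : ℤ), fun j => ?_⟩
    refine (ZMod.intCast_zmod_eq_zero_iff_dvd _ 3).mp ?_
    rw [← h j]
    have := hF' j
    show ((hh s j - hh s' j - (ε.val : ℤ) * phz i j : ℤ) : ZMod 3) = _
    push_cast at this ⊢
    linear_combination this
  have h0 := hS s hs.1 s' hs'.1 hss
  refine fsum_BB_ne_zero k hk _ hgood
    (fun j => (Int.fract (s j * (cc j * (6 * k))) - Int.fract (s' j * (cc j * (6 * k)))) /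
      (cc j * (6 * k))) (fun j => ?_) ?_
  · have hp : (0:ℝ) < cc j * (6 * k) := by have := cc_pos j; positivity
    rw [abs_div, abs_of_pos hp, div_mul_cancel₀ _ hp.ne', abs_lt]
    have a1 := Int.fract_nonneg (s j * (cc j * (6 * k)))
    have a2 := Int.fract_lt_one (s j * (cc j * (6 * k)))
    have a3 := Int.fract_nonneg (s' j * (cc j * (6 * k)))
    have a4 := Int.fract_lt_one (s' j * (cc j * (6 * k)))
    constructor <;> linarith
  · have heq : (fun j => ((hh s j - hh s' j : ℤ) : ℝ) / 3 +
        (Int.fract (s j * (cc j * (6 * k))) - Int.fract (s' j * (cc j * (6 * k)))) /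
      (cc j * (6 * k))) = fun j => s j - s' j := by
      funext j
      have hp := cc_pos j
      have e1 : fl s j - fl s' j = cc j * (2 * k) * (hh s j - hh s' j) := by
        have b1 := Int.emod_add_mul_ediv (fl s j) (cc j * (2 * k))
        have b2 := Int.emod_add_mul_ediv (fl s' j) (cc j * (2 * k))
        have b3 : cl s j = cl s' j := by rw [hs.2, hs'.2]
        simp only [cl] at b3
        simp only [hh]
        linear_combination b3 - b1 + b2
      have e2 : ((fl s j : ℤ) : ℝ) - fl s' j = cc j * (2 * k) * ((hh s j - hh s' j : ℤ) : ℝ) := by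
        exact_mod_cast e1
      have e3 : Int.fract (s j * (cc j * (6 * k))) = s j * (cc j * (6 * k)) - fl s j := rfl
      have e4 : Int.fract (s' j * (cc j * (6 * k))) = s' j * (cc j * (6 * k)) - fl s' j := rfl
      rw [e3, e4]
      field_simp
      linear_combination (-3 : ℝ) * e2
    rw [heq]
    exact h0

/-- Extension by zero of an integer vector from dimension 5 to dimension `d`. -/
def extz {d : ℕ} (a : Fin 5 → ℤ) : Fin d → ℤ :=
  fun j => if h : j.val < 5 then a ⟨j.val, h⟩ else 0

lemma extz_castLE {d : ℕ} (hd : 5 ≤ d) (a : Fin 5 → ℤ) (i : Fin 5) :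
    (extz a : Fin d → ℤ) (Fin.castLE hd i) = a i := by
  simp [extz]

lemma extz_inj {d : ℕ} (hd : 5 ≤ d) : Function.Injective (extz : (Fin 5 → ℤ) → Fin d → ℤ) := by
  intro a b h
  funext i
  rw [← extz_castLE hd a, h, extz_castLE]

lemma extz_sum {d : ℕ} (hd : 5 ≤ d) (f : Fin d → ℝ) (a : Fin 5 → ℤ) :
    ∑ j, f j * ((extz a : Fin d → ℤ) j : ℝ) = ∑ i : Fin 5, f (Fin.castLE hd i) * (a i : ℝ) := by
  symm
  refine Fintype.sum_of_injective (Fin.castLE hd) (Fin.castLE_injective hd) _ _ ?_ ?_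
  · intro j hj
    have : ¬ j.val < 5 := fun h => hj ⟨⟨j.val, h⟩, rfl⟩
    simp [extz, this]
  · intro i
    rw [extz_castLE]

lemma lift_tile {d : ℕ} (hd : 5 ≤ d) (A : Finset (Fin 5 → ℤ))
    (hT : ∃ T : Set (Fin 5 → ℤ), ∀ x, ∃! t, t ∈ T ∧ x - t ∈ A) :
    ∃ T : Set (Fin d → ℤ), ∀ x, ∃! t, t ∈ T ∧ x - t ∈ A.map ⟨extz, extz_inj hd⟩ := by
  obtain ⟨T, hT⟩ := hT
  refine ⟨{t | (fun i => t (Fin.castLE hd i)) ∈ T}, fun x => ?_⟩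
  obtain ⟨t, ⟨ht, hA⟩, huniq⟩ := hT fun i => x (Fin.castLE hd i)
  refine ⟨x - extz ((fun i => x (Fin.castLE hd i)) - t), ⟨?_, ?_⟩, ?_⟩
  · have : (fun i => (x - extz ((fun i => x (Fin.castLE hd i)) - t) : Fin d → ℤ) (Fin.castLE hd i))
        = t := by
      funext i
      rw [Pi.sub_apply, extz_castLE, Pi.sub_apply]
      ring
    show _ ∈ T
    rw [this]
    exact ht
  · rw [sub_sub_cancel]
    exact Finset.mem_map.mpr ⟨_, hA, rfl⟩
  · rintro r ⟨hr, hrA⟩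
    obtain ⟨a, ha, har⟩ := Finset.mem_map.mp hrA
    change extz a = x - r at har
    have ea : a = (fun i => x (Fin.castLE hd i)) - fun i => r (Fin.castLE hd i) := by
      funext i
      rw [← extz_castLE hd a i, har]
      rfl
    have := huniq (fun i => r (Fin.castLE hd i)) ⟨hr, ea ▸ ha⟩
    rw [← this, ← ea, har]
    abel

lemma lift_not_spectral {d : ℕ} (hd : 5 ≤ d) (A : Finset (Fin 5 → ℤ)) (hne : A.Nonempty)
    (hA : ¬ SpectralZd A) : ¬ SpectralZd (A.map ⟨extz, extz_inj hd⟩ : Finset (Fin d → ℤ)) := by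
  classical
  rintro ⟨S, hcard, hS⟩
  apply hA
  have key : ∀ s ∈ S, ∀ s' ∈ S, s ≠ s' → ∑ b ∈ A, Complex.exp (2 * π * Complex.I *
      (∑ i : Fin 5, (s (Fin.castLE hd i) - s' (Fin.castLE hd i)) * (b i : ℝ) : ℝ)) = 0 := by
    intro s hs s' hs' h
    have h0 := hS s hs s' hs' h
    rw [Finset.sum_map] at h0
    rw [← h0]
    refine Finset.sum_congr rfl fun b _ => ?_
    have := extz_sum hd (fun j => s j - s' j) b
    simp only [Function.Embedding.coeFn_mk]
    rw [this]
  have hinj : Set.InjOn (fun (s : Fin d → ℝ) (i : Fin 5) => s (Fin.castLE hd i)) S := by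
    intro s hs s' hs' h
    by_contra hss
    have h0 := key s hs s' hs' hss
    have h1 : ∀ i, s (Fin.castLE hd i) = s' (Fin.castLE hd i) := fun i => congrFun h i
    simp only [h1, sub_self, zero_mul, Finset.sum_const_zero, Complex.ofReal_zero, mul_zero,
      Complex.exp_zero, Finset.sum_const, nsmul_eq_mul, mul_one] at h0
    have := Finset.card_pos.mpr hne
    have h2 : A.card = 0 := by exact_mod_cast h0
    omega
  refine ⟨S.image fun s i => s (Fin.castLE hd i), ?_, ?_⟩
  · rw [Finset.card_image_of_injOn hinj, hcard, Finset.card_map]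
  · intro s hs s' hs' h
    obtain ⟨r, hr, rfl⟩ := Finset.mem_image.mp hs
    obtain ⟨r', hr', rfl⟩ := Finset.mem_image.mp hs'
    exact key r hr r' hr' (by rintro rfl; exact h rfl)


/-- Theorem `th:last`: For every `d ≥ 5` there is a finite subset of
`ℤ^d` which tiles `ℤ^d` by translations but is not spectral in `ℤ^d`, and a finite union
of unit cubes at integer points of `ℝ^d` which tiles `ℝ^d` by translations but is not a
spectral set; this disproves the "tiling ⇒ spectral" direction of Fuglede's conjecture
in dimensions `d ≥ 5`. -/
theorem stmt19 (d : ℕ) (hd : 5 ≤ d) :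
    (∃ A : Finset (Fin d → ℤ),
      (∃ T : Set (Fin d → ℤ), ∀ x : Fin d → ℤ, ∃! t, t ∈ T ∧ x - t ∈ A) ∧
      ¬ SpectralZd A) ∧
    (∃ A : Finset (Fin d → ℤ),
      (∃ T : Set (Fin d → ℝ), ∀ᵐ x : Fin d → ℝ, ∃! t, t ∈ T ∧ x - t ∈ cubes A) ∧
      ¬ SpectralRd (cubes A)) := by
  have hcard := BB_card 1000
  have hne5 : (BB 1000).Nonempty := by
    rw [← Finset.card_pos, hcard]; positivity
  have hns := lift_not_spectral hd _ hne5 (BB_not_spectral 1000 le_rfl)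
  obtain ⟨T, hT⟩ := lift_tile hd _ (BB_tile 1000 (by norm_num))
  refine ⟨⟨_, ⟨T, hT⟩, hns⟩, ⟨_, cubes_tile _ T hT, fun h => hns ?_⟩⟩
  exact spectralZd_of_spectralRd _ (hne5.map) h
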